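/- For every t ∈ ℕ and every w ≥ 0, ∫₀¹ |g_t(w + α·2^{t+1}) − g_t(α·2^{t+1})| dα = (2^{t+1} − w')·w' / 2^{t+1}, where w' = w − 2^{t+1}·⌊w / 2^{t+1}⌋ is the residue of w modulo 2^{t+1}. -/

import Mathlib

open MeasureTheory

/-- The sawtooth function `g_t(x) = 2^t - |x - (⌊x/2^{t+1}⌋·2^{t+1} + 2^t)|`. -/
noncomputable def sawtooth (t : ℕ) (x : ℝ) : ℝ :=
  2 ^ t - |x - ((⌊x / 2 ^ (t + 1)⌋ : ℝ) * 2 ^ (t + 1) + 2 ^ t)|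

/-!
The value `g_t(x)` is the distance from `x` to the nearest multiple of `p = 2^(t+1)`, that is, the
norm of `x` in the circle `ℝ/pℤ`. Two points of the circle satisfy
`|‖x‖ - ‖y‖| = min ‖x - y‖ ‖x + y‖`, so the integrand equals `min ‖w‖ ‖w + 2αp‖`. As `α` runs over
`[0, 1]`, the point `w + 2αp` goes twice around the circle; the integral is therefore the mean of
`min ‖w‖ ‖x‖`, which is `(2/p) ∫₀^{p/2} min ‖w‖ x dx = ‖w‖ (p - ‖w‖) / p`.
-/

open Set AddCircle intervalIntegral

theorem abs_abs_sub_abs_eq_min {R : Type*} [AddCommGroup R] [LinearOrder R] [IsOrderedAddMonoid R]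
    (a b : R) : |(|a| - |b|)| = min |a - b| |a + b| := by
  rcases abs_cases a with ⟨ha, _⟩ | ⟨ha, _⟩ <;> rcases abs_cases b with ⟨hb, _⟩ | ⟨hb, _⟩ <;>
    grind

theorem integral_comp_add_int_mul_of_periodic {E : Type*} [NormedAddCommGroup E] [NormedSpace ℝ E]
    {f : ℝ → E} {p : ℝ} (hf : Function.Periodic f p) (hp : p ≠ 0)
    (hint : IntervalIntegrable f volume 0 p) {n : ℤ} (hn : n ≠ 0) (w : ℝ) :
    ∫ α in (0 : ℝ)..1, f (w + n * p * α) = p⁻¹ • ∫ x in (0 : ℝ)..p, f x := by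
  have hn' : (n : ℝ) ≠ 0 := Int.cast_ne_zero.mpr hn
  calc ∫ α in (0 : ℝ)..1, f (w + n * p * α)
      = (n * p)⁻¹ • ∫ x in w..w + n • p, f x := by
        simp [integral_comp_add_mul f (mul_ne_zero hn' hp)]
    _ = (n * p)⁻¹ • n • ∫ x in (0 : ℝ)..p, f x := by
        rw [hf.intervalIntegral_add_zsmul_eq n w (hf.intervalIntegrable₀ hp hint),
          hf.intervalIntegral_add_eq w 0, zero_add]
    _ = p⁻¹ • ∫ x in (0 : ℝ)..p, f x := by
        rw [← Int.cast_smul_eq_zsmul ℝ, smul_smul]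
        congr 1
        field_simp

theorem integral_min_const_id {r b : ℝ} (hr : 0 ≤ r) (hrb : r ≤ b) :
    ∫ x in (0 : ℝ)..b, min r x = r * b - r ^ 2 / 2 := by
  have hcont : Continuous fun x : ℝ => min r x := by fun_prop
  have below : ∫ x in (0 : ℝ)..r, min r x = ∫ x in (0 : ℝ)..r, x :=
    integral_congr fun x hx => min_eq_right (uIcc_of_le hr ▸ hx).2
  have above : ∫ x in r..b, min r x = ∫ _ in r..b, r :=
    integral_congr fun x hx => min_eq_left (uIcc_of_le hrb ▸ hx).1
  rw [← integral_add_adjacent_intervals (hcont.intervalIntegrable 0 r)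
    (hcont.intervalIntegrable r b), below, above, integral_id,
    intervalIntegral.integral_const, smul_eq_mul]
  ring

section Circle

variable {p : ℝ}

theorem exists_coe_eq_and_norm_eq_abs (x : AddCircle p) :
    ∃ a : ℝ, (a : AddCircle p) = x ∧ ‖x‖ = |a| := by
  obtain ⟨a, rfl⟩ := QuotientAddGroup.mk_surjective x
  refine ⟨a - round (p⁻¹ * a) * p, ?_, AddCircle.norm_eq p⟩
  rw [← zsmul_eq_mul, coe_sub, coe_zsmul, coe_period, smul_zero, sub_zero]

theorem abs_norm_sub_norm_eq_min (x y : AddCircle p) :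
    |‖x‖ - ‖y‖| = min ‖x - y‖ ‖x + y‖ := by
  refine le_antisymm (le_min (abs_norm_sub_norm_le x y) ?_) ?_
  · simpa using abs_norm_sub_norm_le x (-y)
  · obtain ⟨a, rfl, ha⟩ := exists_coe_eq_and_norm_eq_abs x
    obtain ⟨b, rfl, hb⟩ := exists_coe_eq_and_norm_eq_abs y
    rw [ha, hb, abs_abs_sub_abs_eq_min]
    exact min_le_min (QuotientAddGroup.norm_mk_le_norm (m := a - b))
      (QuotientAddGroup.norm_mk_le_norm (m := a + b))

theorem norm_coe_eq_min_sub_floor (hp : 0 < p) (x : ℝ) :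
    ‖(x : AddCircle p)‖ = min (x - p * ⌊x / p⌋) (p - (x - p * ⌊x / p⌋)) := by
  have hfract : p * Int.fract (x / p) = x - p * ⌊x / p⌋ := by
    rw [Int.fract, mul_sub, mul_div_cancel₀ x hp.ne']
  rw [AddCircle.norm_eq' p hp, inv_mul_eq_div, abs_sub_round_eq_min, mul_min_of_nonneg _ _ hp.le,
    mul_sub, mul_one, hfract]

theorem norm_mul_period_sub_norm (hp : 0 < p) (x : ℝ) :
    ‖(x : AddCircle p)‖ * (p - ‖(x : AddCircle p)‖) =
      (p - (x - p * ⌊x / p⌋)) * (x - p * ⌊x / p⌋) := by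
  rw [norm_coe_eq_min_sub_floor hp]
  grind

theorem integral_comp_norm_coe {E : Type*} [NormedAddCommGroup E] [NormedSpace ℝ E] (hp : 0 < p)
    {φ : ℝ → E} (hφ : Continuous φ) :
    ∫ x in (0 : ℝ)..p, φ ‖(x : AddCircle p)‖ = (2 : ℝ) • ∫ x in (0 : ℝ)..p / 2, φ x := by
  have hcont : Continuous fun x : ℝ => φ ‖(x : AddCircle p)‖ :=
    hφ.comp (AddCircle.continuous_mk' p).norm
  have first_half : ∫ x in (0 : ℝ)..p / 2, φ ‖(x : AddCircle p)‖ = ∫ x in (0 : ℝ)..p / 2, φ x := by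
    refine integral_congr fun x hx => ?_
    rw [uIcc_of_le (by positivity)] at hx
    have hx_abs : |x| = x := abs_of_nonneg hx.1
    simp only [(norm_coe_eq_abs_iff p hp.ne').mpr (by rw [hx_abs, abs_of_pos hp]; exact hx.2),
      hx_abs]
  have reflect : ∫ x in p / 2..p, φ ‖(x : AddCircle p)‖ =
      ∫ x in (0 : ℝ)..p / 2, φ ‖(x : AddCircle p)‖ := by
    calc ∫ x in p / 2..p, φ ‖(x : AddCircle p)‖
        = ∫ x in p / 2..p, φ ‖((p - x : ℝ) : AddCircle p)‖ := by
          simp only [coe_sub, coe_period, zero_sub, norm_neg]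
      _ = ∫ x in (0 : ℝ)..p / 2, φ ‖(x : AddCircle p)‖ := by
          rw [integral_comp_sub_left (fun x => φ ‖(x : AddCircle p)‖), sub_self, sub_half]
  rw [← integral_add_adjacent_intervals (hcont.intervalIntegrable 0 (p / 2))
    (hcont.intervalIntegrable (p / 2) p), reflect, first_half, two_smul]

theorem integral_min_norm_coe (hp : 0 < p) {r : ℝ} (hr : 0 ≤ r) (hrp : r ≤ p / 2) :
    ∫ x in (0 : ℝ)..p, min r ‖(x : AddCircle p)‖ = r * (p - r) := by
  rw [integral_comp_norm_coe hp (φ := min r) (by fun_prop), integral_min_const_id hr hrp,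
    smul_eq_mul]
  ring

end Circle

theorem sawtooth_eq_norm (t : ℕ) (x : ℝ) : sawtooth t x = ‖(x : AddCircle (2 ^ (t + 1) : ℝ))‖ := by
  rw [norm_coe_eq_min_sub_floor (by positivity), sawtooth, pow_succ]
  grind

theorem sawtooth_shift_integral_mod_general {p : ℝ} (hp : 0 < p) (w : ℝ) :
    ∫ α in (0 : ℝ)..1, |‖((w + α * p : ℝ) : AddCircle p)‖ - ‖((α * p : ℝ) : AddCircle p)‖|
      = (p - (w - p * ⌊w / p⌋)) * (w - p * ⌊w / p⌋) / p := by
  set r := ‖(w : AddCircle p)‖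
  let f (x : ℝ) : ℝ := min r ‖(x : AddCircle p)‖
  have hf_periodic : Function.Periodic f p := fun x => by simp only [f, coe_add_period]
  have hf_cont : Continuous f := continuous_const.min (AddCircle.continuous_mk' p).norm
  have hr : r ≤ p / 2 := abs_of_pos hp ▸ norm_le_half_period p hp.ne'
  have integrand (α : ℝ) : |‖((w + α * p : ℝ) : AddCircle p)‖ - ‖((α * p : ℝ) : AddCircle p)‖| =
      f (w + (2 : ℤ) * p * α) := by
    rw [abs_norm_sub_norm_eq_min, ← coe_sub, ← coe_add, add_sub_cancel_right,
      show w + α * p + α * p = w + (2 : ℤ) * p * α by push_cast; ring]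
  calc ∫ α in (0 : ℝ)..1, |‖((w + α * p : ℝ) : AddCircle p)‖ - ‖((α * p : ℝ) : AddCircle p)‖|
      = ∫ α in (0 : ℝ)..1, f (w + (2 : ℤ) * p * α) := by simp only [integrand]
    _ = p⁻¹ • ∫ x in (0 : ℝ)..p, f x :=
        integral_comp_add_int_mul_of_periodic hf_periodic hp.ne'
          (hf_cont.intervalIntegrable 0 p) two_ne_zero w
    _ = p⁻¹ * (r * (p - r)) := by rw [integral_min_norm_coe hp (norm_nonneg _) hr, smul_eq_mul]
    _ = (p - (w - p * ⌊w / p⌋)) * (w - p * ⌊w / p⌋) / p := by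
        rw [norm_mul_period_sub_norm hp, inv_mul_eq_div]

/-- For every `w ≥ 0`, with `w' = w - 2^{t+1}·⌊w/2^{t+1}⌋` the residue of `w` mod `2^{t+1}`,
`∫₀¹ |g_t(w + α·2^{t+1}) - g_t(α·2^{t+1})| dα = (2^{t+1} - w')·w' / 2^{t+1}`. -/
theorem sawtooth_shift_integral_mod (t : ℕ) (w : ℝ) (hw : 0 ≤ w) :
    ∫ α in (0:ℝ)..1, |sawtooth t (w + α * 2 ^ (t + 1)) - sawtooth t (α * 2 ^ (t + 1))|
      = (2 ^ (t + 1) - (w - 2 ^ (t + 1) * (⌊w / 2 ^ (t + 1)⌋ : ℝ)))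
          * (w - 2 ^ (t + 1) * (⌊w / 2 ^ (t + 1)⌋ : ℝ)) / 2 ^ (t + 1) := by
  simp only [sawtooth_eq_norm]
  exact sawtooth_shift_integral_mod_general (by positivity) w
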